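/- arXiv:1501.02700 — 2 statements merged into one kernel-verified Lean document; each statement's English description precedes it below -/
import Mathlib

section
/- For 0 < q < 1, every zero of the entire function f(x) = Σ_{n=0}^∞ x^n q^{n(n-1)/2}/n! is real, negative, and simple. -/
open Filter Topology Polynomial

/-- Jensen polynomials evaluated at `-x`. -/
noncomputable def jenQ (q : ℝ) : ℕ → ℝ[X]
  | 0 => 1
  | n + 1 => jenQ q n - X * (jenQ q n).comp (C q * X)

lemma jenQ_coeff (q : ℝ) (n k : ℕ) :
    (jenQ q n).coeff k = (-1) ^ k * (n.choose k : ℝ) * q ^ (k * (k - 1) / 2) := by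
  induction n generalizing k with
  | zero =>
    rcases k with _ | k
    · simp [jenQ]
    · simp [jenQ, Polynomial.coeff_one]
  | succ n ih =>
    rcases k with _ | k
    · simp [jenQ, ih]
    · simp only [jenQ, coeff_sub, coeff_X_mul, comp_C_mul_X_coeff, ih]
      rw [Nat.choose_succ_succ, Nat.triangle_succ]
      push_cast
      ring

lemma jenQ_natDegree (q : ℝ) (n : ℕ) : (jenQ q n).natDegree ≤ n := by
  rw [Polynomial.natDegree_le_iff_coeff_eq_zero]
  intro k hk
  rw [jenQ_coeff, Nat.choose_eq_zero_of_lt hk]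
  simp

lemma jenQ_eval_succ (q : ℝ) (n : ℕ) (x : ℝ) :
    (jenQ q (n + 1)).eval x = (jenQ q n).eval x - x * (jenQ q n).eval (q * x) := by
  simp [jenQ, eval_comp]

lemma jenQ_eval_zero (q : ℝ) (n : ℕ) : (jenQ q n).eval 0 = 1 := by
  rw [← coeff_zero_eq_eval_zero, jenQ_coeff]; simp

/-- sign of a product. -/
lemma prod_sign (n i : ℕ) (a : ℕ → ℝ) (x : ℝ) (hi : i ≤ n) (ha : ∀ j < n, 0 < a j)
    (h1 : ∀ j < i, a j < x) (h2 : ∀ j < n, i ≤ j → x < a j) :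
    0 < (-1) ^ i * ∏ j ∈ Finset.range n, (1 - x / a j) := by
  have e : (-1 : ℝ) ^ i = ∏ j ∈ Finset.range n, (if j < i then (-1 : ℝ) else 1) := by
    rw [← Finset.prod_filter_mul_prod_filter_not (Finset.range n) (fun j => j < i)]
    have : (Finset.range n).filter (fun j => j < i) = Finset.range i := by
      ext j; simp; omega
    rw [Finset.prod_congr rfl (g := fun _ => (-1 : ℝ)) (by intro j hj; simp at hj; simp [hj.2]),
      this, Finset.prod_congr (s₂ := (Finset.range n).filter (fun j => ¬ j < i)) rfl
        (g := fun _ => (1 : ℝ)) (by intro j hj; simp at hj; simp [hj.2])]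
    simp
  rw [e, ← Finset.prod_mul_distrib]
  apply Finset.prod_pos
  intro j hj
  have hjn := Finset.mem_range.1 hj
  split_ifs with h
  · have : 1 < x / a j := by rw [lt_div_iff₀ (ha j hjn)]; linarith [h1 j h]
    linarith
  · have : x / a j < 1 := by rw [div_lt_iff₀ (ha j hjn)]; linarith [h2 j hjn (by omega)]
    linarith

/-- far away, the shifted term dominates -/
lemma far_away (q : ℝ) (hq0 : 0 < q) (n : ℕ) (a : ℕ → ℝ) (ha : ∀ j < n, 0 < a j) (M : ℝ) :
    ∃ r : ℝ, M < r ∧ (-1) ^ n * (∏ j ∈ Finset.range n, (1 - r / a j)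
      - r * ∏ j ∈ Finset.range n, (1 - q * r / a j)) < 0 := by
  have hev : ∀ᶠ r : ℝ in atTop, (∀ j ∈ Finset.range n, a j * (2 / q + 1) < r) ∧ (2 / q) ^ n < r
      ∧ M < r := by
    refine Filter.Eventually.and ?_ ((eventually_gt_atTop _).and (eventually_gt_atTop _))
    rw [Filter.eventually_all_finset]
    intro j _
    exact eventually_gt_atTop _
  obtain ⟨r, h1, h2, h3⟩ := hev.exists
  refine ⟨r, h3, ?_⟩
  have e : ∀ s : ℝ, (-1) ^ n * ∏ j ∈ Finset.range n, (1 - s / a j)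
      = ∏ j ∈ Finset.range n, (s / a j - 1) := by
    intro s
    have : (-1 : ℝ) ^ n = ∏ j ∈ Finset.range n, (-1 : ℝ) := by simp
    rw [this, ← Finset.prod_mul_distrib]
    exact Finset.prod_congr rfl (fun j _ => by ring)
  rw [mul_sub, mul_left_comm, e, e]
  have hr1 : ∀ j ∈ Finset.range n, 2 / q + 1 < r / a j := by
    intro j hj
    rw [lt_div_iff₀ (ha j (Finset.mem_range.1 hj))]
    linarith [h1 j hj]
  have hqq : q * (2 / q) = 2 := by field_simp
  have h2q : 0 < 2 / q := by positivity
  have hpos : 0 < ∏ j ∈ Finset.range n, (q * r / a j - 1) := by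
    apply Finset.prod_pos
    intro j hj
    have := mul_lt_mul_of_pos_left (hr1 j hj) hq0
    rw [mul_div_assoc]
    linarith
  have hle : ∏ j ∈ Finset.range n, (r / a j - 1) ≤
      (2 / q) ^ n * ∏ j ∈ Finset.range n, (q * r / a j - 1) := by
    have : (2 / q) ^ n = ∏ j ∈ Finset.range n, (2 / q) := by simp only [Finset.prod_const, Finset.card_range]
    rw [this, ← Finset.prod_mul_distrib]
    apply Finset.prod_le_prod
    · intro j hj; linarith [hr1 j hj]
    · intro j hj
      have : 2 / q * (q * r / a j - 1) = 2 * (r / a j) - 2 / q := by field_simp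
      rw [this]; linarith [hr1 j hj]
  have := mul_lt_mul_of_pos_right h2 hpos
  linarith

lemma ivt_root (p : ℝ[X]) (s l r : ℝ) (hlr : l < r) (hl : 0 < s * p.eval l)
    (hr : s * p.eval r < 0) : ∃ b, l < b ∧ b < r ∧ p.eval b = 0 := by
  have hc : ContinuousOn (fun x => s * p.eval x) (Set.Icc l r) := by fun_prop
  obtain ⟨b, hb, hb0⟩ := intermediate_value_Ioo' hlr.le hc ⟨hr, hl⟩
  refine ⟨b, hb.1, hb.2, ?_⟩
  rcases mul_eq_zero.1 hb0 with h | h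
  · rw [h] at hl; simp at hl
  · exact h

lemma a_mono (q : ℝ) (hq1 : q < 1) (n : ℕ) (a : ℕ → ℝ) (ha : ∀ j < n, 0 < a j)
    (hs : ∀ j, j + 1 < n → a j < q * a (j + 1)) (i j : ℕ) (hij : i < j) (hj : j < n) :
    a i < q * a j := by
  induction j with
  | zero => omega
  | succ j ih =>
    rcases Nat.lt_succ_iff_lt_or_eq.1 hij with h | h
    · have h1 := ih h (by omega)
      have h2 := hs j hj
      have := ha j (by omega)
      nlinarith
    · subst h; exact hs _ hj

lemma jenQ_factor (q : ℝ) (hq0 : 0 < q) (hq1 : q < 1) (n : ℕ) :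
    ∃ a : ℕ → ℝ, (∀ j < n, 0 < a j) ∧ (∀ j, j + 1 < n → a j < q * a (j + 1)) ∧
      jenQ q n = ∏ j ∈ Finset.range n, (1 - C (a j)⁻¹ * X) := by
  induction n with
  | zero => exact ⟨fun _ => 1, by simp, by simp, by simp [jenQ]⟩
  | succ n ih =>
    obtain ⟨a, ha, hs, hf⟩ := ih
    have hm := a_mono q hq1 n a ha hs
    have hev : ∀ x, (jenQ q n).eval x = ∏ j ∈ Finset.range n, (1 - x / a j) := by
      intro x
      rw [hf, eval_prod]
      refine Finset.prod_congr rfl (fun j _ => ?_)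
      simp; ring
    have hmle : ∀ i j, i ≤ j → j < n → a i ≤ a j := by
      intro i j hij hj
      rcases hij.eq_or_lt with h | h
      · rw [h]
      · have := hm i j h hj
        have := ha j hj
        nlinarith
    have hroot : ∀ i, i ≤ n → ∃ b : ℝ, 0 < b ∧ (∀ k, i = k + 1 → a k < q * b) ∧
        (i < n → b < a i) ∧ (jenQ q (n + 1)).eval b = 0 := by
      intro i hi
      -- left end point
      obtain ⟨l, hl0, hlk, hli, hl⟩ : ∃ l : ℝ, 0 ≤ l ∧ (∀ k, i = k + 1 → a k = q * l) ∧
          (i < n → l < a i) ∧ 0 < (-1) ^ i * (jenQ q (n + 1)).eval l := by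
        rcases i with _ | k
        · refine ⟨0, le_rfl, by simp, fun h => ha 0 h, ?_⟩
          rw [jenQ_eval_zero]; simp
        · have hk : 0 < a k := ha k (by omega)
          have hqk : q * (a k / q) = a k := by field_simp
          have hlt : k + 1 < n → a k / q < a (k + 1) := by
            intro h
            rw [div_lt_iff₀ hq0]
            linarith [hs k h]
          have hgt : a k < a k / q := by rw [lt_div_iff₀ hq0]; nlinarith
          refine ⟨a k / q, by positivity, ?_, hlt, ?_⟩
          · intro k' hk'
            obtain rfl : k = k' := by omega
            exact hqk.symm
          · rw [jenQ_eval_succ, hqk]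
            have h0 : (jenQ q n).eval (a k) = 0 := by
              rw [hev]
              apply Finset.prod_eq_zero (Finset.mem_range.2 (show k < n by omega))
              field_simp; simp
            rw [h0, mul_zero, sub_zero, hev]
            apply prod_sign n (k + 1) a _ hi ha
            · intro j hj
              exact lt_of_le_of_lt (hmle j k (by omega) (by omega)) hgt
            · intro j hj hkj
              exact lt_of_lt_of_le (hlt (by omega)) (hmle _ _ hkj hj)
      obtain ⟨r, hlr, hri, hr⟩ : ∃ r : ℝ, l < r ∧ (i < n → r = a i) ∧
          (-1) ^ i * (jenQ q (n + 1)).eval r < 0 := by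
        rcases hi.eq_or_lt with h | h
        · obtain ⟨r, h1, h2⟩ := far_away q hq0 n a ha l
          refine ⟨r, h1, fun h' => by omega, ?_⟩
          rw [jenQ_eval_succ, hev, hev, h]
          exact h2
        · refine ⟨a i, hli h, fun _ => rfl, ?_⟩
          have h0 : (jenQ q n).eval (a i) = 0 := by
            rw [hev]
            apply Finset.prod_eq_zero (Finset.mem_range.2 h)
            have := ha i h
            field_simp; simp
          rw [jenQ_eval_succ, h0, hev]
          have hai := ha i h
          have := prod_sign n i a (q * a i) hi ha (fun j hj => hm j i hj h) (by
            intro j hj hij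
            have := hmle i j hij hj
            nlinarith)
          have := mul_pos hai this
          linarith
      obtain ⟨b, hb1, hb2, hb3⟩ := ivt_root _ _ l r hlr hl hr
      refine ⟨b, lt_of_le_of_lt hl0 hb1, ?_, ?_, hb3⟩
      · intro k hk
        rw [hlk k hk]
        exact mul_lt_mul_of_pos_left hb1 hq0
      · intro h; rw [← hri h]; exact hb2
    choose! b hb0 hbl hbr hbz using hroot
    have hbs : ∀ j, j + 1 < n + 1 → b j < q * b (j + 1) := fun j hj =>
      (hbr j (by omega) (by omega)).trans (hbl (j + 1) (by omega) j rfl)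
    have hbp : ∀ j < n + 1, 0 < b j := fun j hj => hb0 j (by omega)
    refine ⟨b, hbp, hbs, ?_⟩
    have hbm := a_mono q hq1 (n + 1) b hbp hbs
    let v : ℕ → ℝ := fun i => if i < n + 1 then b i else 0
    apply Polynomial.eq_of_degrees_lt_of_eval_index_eq (v := v) (Finset.range (n + 2))
    · have key : ∀ i j, i < j → j < n + 2 → v i ≠ v j := by
        intro i j hij hj
        have hi : i < n + 1 := by omega
        by_cases hj' : j < n + 1
        · simp only [v, hi, hj', if_true]
          have := hbm i j hij hj'
          have := hbp j hj'
          intro h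
          nlinarith
        · simp only [v, hi, hj', if_true, if_false]
          exact (hbp i hi).ne'
      intro i hi j hj h
      simp only [Finset.coe_range, Set.mem_Iio] at hi hj
      rcases lt_trichotomy i j with h' | h' | h'
      · exact absurd h (key i j h' hj)
      · exact h'
      · exact absurd h.symm (key j i h' hi)
    · rw [Finset.card_range]
      refine lt_of_le_of_lt (Polynomial.degree_le_of_natDegree_le (jenQ_natDegree q (n+1))) ?_
      exact_mod_cast Nat.lt_succ_self _
    · rw [Finset.card_range]
      have : (∏ j ∈ Finset.range (n+1), (1 - C (b j)⁻¹ * X)).natDegree ≤ n + 1 := by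
        refine (Polynomial.natDegree_prod_le _ _).trans ?_
        refine (Finset.sum_le_card_nsmul _ _ 1 ?_).trans (by simp)
        intro j _
        compute_degree
      refine lt_of_le_of_lt (Polynomial.degree_le_of_natDegree_le this) ?_
      exact_mod_cast Nat.lt_succ_self _
    · intro i hi
      rw [Finset.mem_range] at hi
      by_cases hi' : i < n + 1
      · simp only [v, hi', if_true]
        rw [hbz i (by omega), eval_prod]
        symm
        apply Finset.prod_eq_zero (Finset.mem_range.2 hi')
        have := hbp i hi'
        simp; field_simp; simp
      · simp only [v, hi', if_false]
        rw [jenQ_eval_zero, eval_prod]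
        simp

/-- terms of the series -/
noncomputable def dterm (q : ℝ) (z : ℂ) (n : ℕ) : ℂ :=
  z ^ n * (q : ℂ) ^ (n * (n - 1) / 2) / (n.factorial : ℂ)

lemma dterm_norm_le (q : ℝ) (hq0 : 0 < q) (hq1 : q < 1) (z : ℂ) (n : ℕ) :
    ‖dterm q z n‖ ≤ ‖z‖ ^ n / (n.factorial : ℝ) := by
  unfold dterm
  rw [norm_div, norm_mul, norm_pow, norm_pow, Complex.norm_natCast, Complex.norm_real,
    Real.norm_of_nonneg hq0.le]
  gcongr
  exact mul_le_of_le_one_right (by positivity) (pow_le_one₀ hq0.le hq1.le)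

lemma dterm_summable (q : ℝ) (hq0 : 0 < q) (hq1 : q < 1) (z : ℂ) : Summable (dterm q z) :=
  Summable.of_norm_bounded (Real.summable_pow_div_factorial ‖z‖) (dterm_norm_le q hq0 hq1 z)

lemma jen_tendsto (q : ℝ) (hq0 : 0 < q) (hq1 : q < 1) (z : ℂ) :
    Tendsto (fun N : ℕ => aeval (-(z / (N : ℂ))) (jenQ q N)) atTop (𝓝 (∑' n, dterm q z n)) := by
  have e : ∀ N : ℕ, aeval (-(z / (N : ℂ))) (jenQ q N) =
      ∑' k : ℕ, (((N.choose k : ℝ) * ((N : ℝ)⁻¹) ^ k : ℝ) : ℂ) *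
        (z ^ k * (q : ℂ) ^ (k * (k - 1) / 2)) := by
    intro N
    rw [Polynomial.aeval_eq_sum_range' (Nat.lt_succ_of_le (jenQ_natDegree q N)),
      tsum_eq_sum (s := Finset.range (N + 1))]
    · refine Finset.sum_congr rfl (fun k _ => ?_)
      rw [jenQ_coeff, Complex.real_smul, neg_eq_neg_one_mul (z / (N : ℂ)), mul_pow, div_eq_mul_inv,
        mul_pow]
      push_cast
      have : ((-1 : ℂ) ^ k) * (-1) ^ k = 1 := by rw [← mul_pow]; simp
      linear_combination ((N.choose k : ℂ) * (q : ℂ) ^ (k * (k - 1) / 2) * z ^ k *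
        ((N : ℂ)⁻¹) ^ k) * this
    · intro k hk
      rw [Nat.choose_eq_zero_of_lt (by simpa using hk)]
      simp
  simp_rw [e]
  apply tendsto_tsum_of_dominated_convergence (Real.summable_pow_div_factorial ‖z‖)
  · intro k
    have h1 : Tendsto (fun n : ℕ => (n : ℝ) * (n : ℝ)⁻¹) atTop (𝓝 1) := by
      apply tendsto_const_nhds.congr'
      filter_upwards [eventually_ge_atTop 1] with n hn
      have : (n : ℝ) ≠ 0 := by positivity
      field_simp
    have h2 := ProbabilityTheory.tendsto_choose_mul_pow_atTop k h1
    have h3 := ((Complex.continuous_ofReal.tendsto _).comp h2).mul_const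
      (z ^ k * (q : ℂ) ^ (k * (k - 1) / 2))
    have h4 : dterm q z k = (((1 : ℝ) ^ k / (k.factorial : ℝ) : ℝ) : ℂ) *
        (z ^ k * (q : ℂ) ^ (k * (k - 1) / 2)) := by
      unfold dterm
      push_cast
      ring
    rw [h4]
    exact h3
  · filter_upwards [eventually_ge_atTop 1] with N hN k
    have hN' : (0 : ℝ) < N := by positivity
    rw [norm_mul, norm_mul, norm_pow, norm_pow, Complex.norm_real, Complex.norm_real,
      Real.norm_of_nonneg hq0.le, Real.norm_of_nonneg (by positivity)]
    have h1 : (N.choose k : ℝ) * ((N : ℝ)⁻¹) ^ k ≤ 1 / (k.factorial : ℝ) := by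
      have := Nat.choose_le_pow_div (α := ℝ) k N
      rw [inv_pow, ← div_eq_mul_inv, div_le_iff₀ (by positivity)]
      refine this.trans (le_of_eq (by ring))
    have h2 : ‖z‖ ^ k * q ^ (k * (k - 1) / 2) ≤ ‖z‖ ^ k :=
      mul_le_of_le_one_right (by positivity) (pow_le_one₀ hq0.le hq1.le)
    calc _ ≤ 1 / (k.factorial : ℝ) * ‖z‖ ^ k := by gcongr
      _ = _ := by ring

lemma slit_bound (z : ℂ) (hz : z ∈ Complex.slitPlane) :
    ∃ C : ℝ, 0 ≤ C ∧ ∀ r : ℝ, 0 ≤ r → Real.exp (-(C * r)) ≤ ‖1 + z * (r : ℂ)‖ := by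
  rcases hz with hx | hy
  · refine ⟨0, le_rfl, fun r hr => ?_⟩
    have h := Complex.re_le_norm (1 + z * (r : ℂ))
    simp at h ⊢
    have := mul_nonneg hx.le hr
    linarith
  · have hz0 : 0 < ‖z‖ := by
      rw [norm_pos_iff]; rintro rfl; simp at hy
    have hy' : 0 < |z.im| := abs_pos.2 hy
    set C : ℝ := 2 * ‖z‖ + 4 * ‖z‖ ^ 2 / |z.im| with hC
    have hC0 : 0 ≤ C := by positivity
    refine ⟨C, hC0, fun r hr => ?_⟩
    have hexp : Real.exp (-(C * r)) ≤ 1 / (1 + C * r) := by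
      rw [Real.exp_neg, ← one_div]
      have := Real.add_one_le_exp (C * r)
      apply one_div_le_one_div_of_le (by positivity)
      linarith
    refine hexp.trans ?_
    rw [div_le_iff₀ (by positivity)]
    rcases le_total (r * ‖z‖) (1 / 2) with h | h
    · have h1 : 1 - r * ‖z‖ ≤ ‖1 + z * (r : ℂ)‖ := by
        have := norm_sub_norm_le (1 : ℂ) (-(z * (r : ℂ)))
        rw [norm_neg, norm_mul, norm_one, Complex.norm_real, Real.norm_of_nonneg hr,
          sub_neg_eq_add] at this
        linarith
      have h2 : 1 + 2 * (r * ‖z‖) ≤ 1 + C * r := by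
        have : 0 ≤ 4 * ‖z‖ ^ 2 / |z.im| * r := by positivity
        rw [hC]; nlinarith
      have h3 : 0 ≤ r * ‖z‖ := by positivity
      have h4 : 0 ≤ 1 - r * ‖z‖ := by linarith
      calc (1 : ℝ) ≤ (1 - r * ‖z‖) * (1 + 2 * (r * ‖z‖)) := by nlinarith
        _ ≤ _ := by gcongr
    · have h1 : r * |z.im| ≤ ‖1 + z * (r : ℂ)‖ := by
        have := Complex.abs_im_le_norm (1 + z * (r : ℂ))
        simp [abs_mul, abs_of_nonneg hr] at this
        linarith
      have h2 : 4 * ‖z‖ ^ 2 / |z.im| * r ≤ 1 + C * r := by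
        have : 0 ≤ 2 * ‖z‖ * r := by positivity
        rw [hC]; nlinarith
      calc (1 : ℝ) ≤ 4 * (r * ‖z‖) ^ 2 := by nlinarith
        _ = (r * |z.im|) * (4 * ‖z‖ ^ 2 / |z.im| * r) := by field_simp
        _ ≤ _ := by gcongr

lemma one_add_sum_le (s : ℕ → ℝ) (n : ℕ) (hs : ∀ j < n, 0 ≤ s j) :
    1 + ∑ j ∈ Finset.range n, s j ≤ ∏ j ∈ Finset.range n, (1 + s j) := by
  induction n with
  | zero => simp
  | succ n ih =>
    rw [Finset.sum_range_succ, Finset.prod_range_succ]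
    have h1 := ih (fun j hj => hs j (by omega))
    have h2 := hs n (by omega)
    have h3 : 0 ≤ ∑ j ∈ Finset.range n, s j :=
      Finset.sum_nonneg (fun j hj => hs j (by have := Finset.mem_range.1 hj; omega))
    nlinarith

lemma slit_ne_zero (q : ℝ) (hq0 : 0 < q) (hq1 : q < 1) (z : ℂ) (hz : z ∈ Complex.slitPlane) :
    ∑' n, dterm q z n ≠ 0 := by
  obtain ⟨C, hC0, hC⟩ := slit_bound z hz
  have hfac : ∀ N : ℕ, ∃ s : ℕ → ℝ, (∀ j < N, 0 ≤ s j) ∧ ∀ w : ℂ,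
      aeval (-(w / (N : ℂ))) (jenQ q N) = ∏ j ∈ Finset.range N, (1 + w * (s j : ℂ)) := by
    intro N
    obtain ⟨a, ha, -, hf⟩ := jenQ_factor q hq0 hq1 N
    refine ⟨fun j => (a j)⁻¹ * (N : ℝ)⁻¹, fun j hj => ?_, fun w => ?_⟩
    · have := ha j hj; positivity
    · rw [hf, map_prod]
      refine Finset.prod_congr rfl (fun j _ => ?_)
      simp
      ring
  choose s hs0 hs using hfac
  set B := ‖∑' n, dterm q 1 n‖ + 1
  have h1 : ∀ᶠ N : ℕ in atTop, ‖aeval (-((1 : ℂ) / (N : ℂ))) (jenQ q N)‖ < B :=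
    (jen_tendsto q hq0 hq1 1).norm.eventually_lt_const (lt_add_one _)
  have h2 : ∀ᶠ N : ℕ in atTop, Real.exp (-(C * B)) ≤ ‖aeval (-(z / (N : ℂ))) (jenQ q N)‖ := by
    filter_upwards [h1] with N hN
    rw [hs N 1] at hN
    have hle := one_add_sum_le (s N) N (hs0 N)
    have hnorm : ‖∏ j ∈ Finset.range N, (1 + 1 * (s N j : ℂ))‖
        = ∏ j ∈ Finset.range N, (1 + s N j) := by
      rw [norm_prod]
      refine Finset.prod_congr rfl (fun j hj => ?_)
      have := hs0 N j (Finset.mem_range.1 hj)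
      rw [one_mul, ← Complex.ofReal_one, ← Complex.ofReal_add, Complex.norm_real,
        Real.norm_of_nonneg (by linarith)]
    rw [hnorm] at hN
    rw [hs N z, norm_prod]
    calc Real.exp (-(C * B)) ≤ Real.exp (∑ j ∈ Finset.range N, -(C * s N j)) := by
          rw [Real.exp_le_exp, Finset.sum_neg_distrib, ← Finset.mul_sum]
          have : C * ∑ j ∈ Finset.range N, s N j ≤ C * B := by
            gcongr; linarith
          linarith
      _ = ∏ j ∈ Finset.range N, Real.exp (-(C * s N j)) := Real.exp_sum _ _
      _ ≤ _ := by
          apply Finset.prod_le_prod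
          · intro j _; positivity
          · intro j hj; exact hC _ (hs0 N j (Finset.mem_range.1 hj))
  have h3 := ge_of_tendsto (jen_tendsto q hq0 hq1 z).norm h2
  intro h
  rw [h, norm_zero] at h3
  exact absurd (Real.exp_pos _) (not_lt.2 h3)

lemma dfun_hasDerivAt (q : ℝ) (hq0 : 0 < q) (hq1 : q < 1) (z : ℂ) :
    HasDerivAt (fun w => ∑' n, dterm q w n) (∑' n, dterm q (q * z) n) z := by
  set R := ‖z‖ + 1
  have hR : 0 < R := by positivity
  let g' : ℕ → ℂ → ℂ := fun n w => (n : ℂ) * w ^ (n - 1) * (q : ℂ) ^ (n * (n - 1) / 2) /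
    (n.factorial : ℂ)
  have hg'0 : ∀ w, g' 0 w = 0 := by intro w; simp [g']
  have hg's : ∀ n w, g' (n + 1) w = dterm q (q * w) n := by
    intro n w
    simp only [g', dterm]
    rw [Nat.triangle_succ, Nat.factorial_succ]
    have h1 : (n.factorial : ℂ) ≠ 0 := by exact_mod_cast n.factorial_ne_zero
    have h2 : ((n + 1 : ℕ) : ℂ) ≠ 0 := by exact_mod_cast n.succ_ne_zero
    rw [Nat.cast_mul, Nat.add_sub_cancel]
    field_simp
    ring
  have hu : Summable (fun n : ℕ => if n = 0 then 0 else R ^ (n - 1) / ((n - 1).factorial : ℝ)) := by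
    rw [← summable_nat_add_iff 1]
    simpa using Real.summable_pow_div_factorial R
  have hzR : z ∈ Metric.ball (0 : ℂ) R := by simp [R]
  have key := hasDerivAt_tsum_of_isPreconnected (g := fun n w => dterm q w n) (g' := g') hu
    (Metric.isOpen_ball (x := (0 : ℂ)) (ε := R)) (convex_ball _ _).isPreconnected
    (by
      intro n y _
      exact ((hasDerivAt_pow n y).mul_const _).div_const _)
    (by
      intro n y hy
      rcases n with _ | n
      · simp [hg'0]
      · rw [hg's]
        simp only [Nat.add_eq_zero_iff, one_ne_zero, and_false, if_false, Nat.add_sub_cancel]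
        refine (dterm_norm_le q hq0 hq1 _ n).trans ?_
        have : ‖(q : ℂ) * y‖ ≤ R := by
          rw [norm_mul, Complex.norm_real, Real.norm_of_nonneg hq0.le]
          have : ‖y‖ < R := by simpa using hy
          nlinarith [norm_nonneg y]
        gcongr)
    hzR (dterm_summable q hq0 hq1 z) hzR
  have hsum : Summable (fun n => g' n z) := by
    rw [← summable_nat_add_iff 1]
    simp_rw [hg's]
    exact dterm_summable q hq0 hq1 _
  rw [hsum.tsum_eq_zero_add, hg'0, zero_add] at key
  simp_rw [hg's] at key
  exact key

lemma dfun_zero (q : ℝ) : ∑' n, dterm q 0 n = 1 := by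
  rw [tsum_eq_single 0]
  · simp [dterm]
  · intro n hn; simp [dterm, hn]

lemma zeros_finite (q : ℝ) (hq0 : 0 < q) (hq1 : q < 1) (x₀ : ℝ) :
    {x : ℝ | x ∈ Set.Ioo x₀ 0 ∧ ∑' n, dterm q x n = 0}.Finite := by
  by_contra hinf
  set S := {x : ℝ | x ∈ Set.Ioo x₀ 0 ∧ ∑' n, dterm q x n = 0}
  have hinf' : ((fun x : ℝ => (x : ℂ)) '' S).Infinite :=
    Set.Infinite.image (Complex.ofReal_injective.injOn) hinf
  obtain ⟨w, -, hw⟩ := Set.Infinite.exists_accPt_of_subset_isCompact hinf'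
    ((isCompact_Icc (a := x₀) (b := 0)).image Complex.continuous_ofReal)
    (Set.image_mono (fun x hx => ⟨hx.1.1.le, hx.1.2.le⟩))
  have hd : Differentiable ℂ (fun w => ∑' n, dterm q w n) :=
    fun w => (dfun_hasDerivAt q hq0 hq1 w).differentiableAt
  have han : AnalyticOnNhd ℂ (fun w => ∑' n, dterm q w n) Set.univ :=
    fun w _ => hd.analyticAt w
  have := han.eqOn_zero_of_preconnected_of_frequently_eq_zero isPreconnected_univ
    (Set.mem_univ w) (by
      rw [accPt_iff_frequently_nhdsNE] at hw
      refine hw.mono ?_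
      rintro _ ⟨x, hx, rfl⟩
      exact hx.2)
  have h0 := this (Set.mem_univ (0 : ℂ))
  simp only [dfun_zero] at h0
  exact one_ne_zero h0

lemma dfun_real (q x : ℝ) : ∃ y : ℝ, ∑' n, dterm q x n = (y : ℂ) := by
  refine ⟨∑' n : ℕ, x ^ n * q ^ (n * (n - 1) / 2) / (n.factorial : ℝ), ?_⟩
  rw [Complex.ofReal_tsum]
  refine tsum_congr (fun n => ?_)
  simp [dterm]

lemma simple_zero (q : ℝ) (hq0 : 0 < q) (hq1 : q < 1) (x₀ : ℝ) (hx : x₀ < 0)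
    (h0 : ∑' n, dterm q x₀ n = 0) : ∑' n, dterm q (q * x₀) n ≠ 0 := by
  intro h1
  choose F hF using dfun_real q
  have hF0 : ∀ x : ℝ, ∑' n, dterm q x n = 0 ↔ F x = 0 := by
    intro x; rw [hF]; simp
  have hFd : ∀ x : ℝ, HasDerivAt F (F (q * x)) x := by
    intro x
    have := (dfun_hasDerivAt q hq0 hq1 (x : ℂ)).real_of_complex
    rw [← Complex.ofReal_mul, hF, Complex.ofReal_re] at this
    refine this.congr_of_eventuallyEq (Eventually.of_forall fun y => ?_)
    simp only [hF, Complex.ofReal_re]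
  rw [hF0] at h0
  rw [← Complex.ofReal_mul, hF0] at h1
  classical
  set S : Finset ℝ := (zeros_finite q hq0 hq1 x₀).toFinset
  have hS : ∀ x, x ∈ S ↔ (x₀ < x ∧ x < 0) ∧ F x = 0 := by
    intro x; simp [S, hF0]
  -- zeros of the derivative
  set T : Finset ℝ := (S.image (fun y => y / q)).filter (fun y => x₀ < y)
  have hT : ∀ x, x ∈ T ↔ (x₀ < x ∧ x < 0) ∧ F (q * x) = 0 := by
    intro x
    simp only [T, Finset.mem_filter, Finset.mem_image, hS]
    constructor
    · rintro ⟨⟨y, ⟨⟨hy1, hy2⟩, hy3⟩, rfl⟩, h⟩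
      refine ⟨⟨h, div_neg_of_neg_of_pos hy2 hq0⟩, ?_⟩
      rwa [mul_div_cancel₀ _ hq0.ne']
    · rintro ⟨⟨h, h'⟩, h''⟩
      refine ⟨⟨q * x, ⟨⟨by nlinarith, by nlinarith⟩, h''⟩, by field_simp⟩, h⟩
  have hx₀S : x₀ ∉ S := by rw [hS]; intro h; exact lt_irrefl _ h.1.1
  have hx₀T : x₀ ∉ T := by rw [hT]; intro h; exact lt_irrefl _ h.1.1
  have hc1 : (insert x₀ S).card ≤ T.card + 1 := by
    apply Finset.card_le_of_interleaved
    intro x hx y hy hxy _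
    have hz : ∀ x ∈ insert x₀ S, x₀ ≤ x ∧ x < 0 ∧ F x = 0 := by
      intro x hx
      rcases Finset.mem_insert.1 hx with rfl | h
      · exact ⟨le_rfl, by assumption, h0⟩
      · rw [hS] at h; exact ⟨h.1.1.le, h.1.2, h.2⟩
    obtain ⟨hx1, hx2, hx3⟩ := hz x hx
    obtain ⟨hy1, hy2, hy3⟩ := hz y hy
    obtain ⟨c, hc, hc'⟩ := exists_hasDerivAt_eq_zero hxy
      (fun t _ => (hFd t).continuousAt.continuousWithinAt) (hx3.trans hy3.symm)
      (fun t _ => hFd t)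
    refine ⟨c, ?_, hc.1, hc.2⟩
    rw [hT]
    exact ⟨⟨hx1.trans_lt hc.1, hc.2.trans hy2⟩, hc'⟩
  have hc2 : (insert x₀ T).card ≤ S.card := by
    apply Finset.card_le_card_of_injOn (fun y => q * y)
    · intro y hy
      rcases Finset.mem_insert.1 hy with rfl | h
      · simp only [Finset.mem_coe, hS]
        exact ⟨⟨by nlinarith, by nlinarith⟩, h1⟩
      · rw [hT] at h
        simp only [Finset.mem_coe, hS]
        exact ⟨⟨by nlinarith, by nlinarith⟩, h.2⟩
    · intro a _ b _ h
      exact mul_left_cancel₀ hq0.ne' h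
  rw [Finset.card_insert_of_notMem hx₀S] at hc1
  rw [Finset.card_insert_of_notMem hx₀T] at hc2
  omega

/-- For `0 < q < 1`, every zero of the entire function
`f(z) = Σ_{n=0}^∞ z^n q^{n(n-1)/2}/n!` is real, negative, and simple
(the derivative of `f` does not vanish there). -/
theorem zeros_real_negative_simple (q : ℝ) (hq0 : 0 < q) (hq1 : q < 1)
    (f : ℂ → ℂ)
    (hf : ∀ z : ℂ, f z = ∑' n : ℕ, z ^ n * (q : ℂ) ^ (n * (n - 1) / 2) / (n.factorial : ℂ)) :
    ∀ z : ℂ, f z = 0 → (∃ x : ℝ, x < 0 ∧ z = (x : ℂ)) ∧ deriv f z ≠ 0 := by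
  have hf' : f = fun w => ∑' n, dterm q w n := by
    funext w; rw [hf]; rfl
  subst hf'
  intro z hz
  have hns : z ∉ Complex.slitPlane := fun h => slit_ne_zero q hq0 hq1 z h hz
  have hz0 : z ≠ 0 := by
    rintro rfl
    simp only [dfun_zero] at hz
    exact one_ne_zero hz
  rw [Complex.mem_slitPlane_iff] at hns
  push Not at hns
  have hzr : z = (z.re : ℂ) := by
    apply Complex.ext <;> simp [hns.2]
  have hneg : z.re < 0 := by
    refine lt_of_le_of_ne hns.1 (fun h => hz0 ?_)
    rw [hzr, h]; simp
  refine ⟨⟨z.re, hneg, hzr⟩, ?_⟩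
  rw [(dfun_hasDerivAt q hq0 hq1 z).deriv]
  rw [hzr] at hz ⊢
  exact simple_zero q hq0 hq1 z.re hneg hz
end

section
/- For 0 < q < 1, the deformed exponential function f(x) = Σ_{n=0}^∞ x^n q^{n(n-1)/2}/n! admits the infinite product representation f(x) = ∏_{n=1}^∞ (1 − x/x_n), where (x_n)_{n≥1} is the strictly decreasing sequence of its (negative real) zeros. -/
open Polynomial Filter Topology

noncomputable def dP (q : ℝ) : ℕ → ℝ[X]
  | 0 => 1
  | N + 1 => dP q N + X * (dP q N).comp (C q * X)

lemma dP_coeff (q : ℝ) (N n : ℕ) :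
    (dP q N).coeff n = (N.choose n : ℝ) * q ^ (n * (n - 1) / 2) := by
  induction N generalizing n with
  | zero =>
    cases n with
    | zero => simp [dP]
    | succ n => simp [dP, coeff_one]
  | succ N ih =>
    cases n with
    | zero => simp [dP, ih]
    | succ n =>
      simp only [dP, coeff_add, coeff_X_mul, comp_C_mul_X_coeff, ih, Nat.choose_succ_succ]
      have : (n + 1) * (n + 1 - 1) / 2 = n * (n - 1) / 2 + n := by
        rw [← Nat.choose_two_right, ← Nat.choose_two_right, Nat.choose_succ_succ' n 1]
        simp [add_comm]
      rw [this, pow_add]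
      push_cast
      ring

lemma dP_natDegree_le (q : ℝ) (N : ℕ) : (dP q N).natDegree ≤ N := by
  rw [natDegree_le_iff_coeff_eq_zero]
  intro n hn
  rw [dP_coeff, Nat.choose_eq_zero_of_lt hn]; simp

lemma dP_eval_succ (q : ℝ) (N : ℕ) (t : ℝ) :
    (dP q (N + 1)).eval t = (dP q N).eval t + t * (dP q N).eval (q * t) := by
  simp [dP, eval_comp]

lemma sign_prod (c : ℕ → ℝ) (N k : ℕ) (hk : k ≤ N) (h1 : ∀ j < k, c j < 0)
    (h2 : ∀ j, k ≤ j → j < N → 0 < c j) :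
    0 < (-1 : ℝ) ^ k * ∏ j ∈ Finset.range N, c j := by
  rw [← Finset.prod_range_mul_prod_Ico c hk, ← mul_assoc]
  apply mul_pos
  · have : (-1 : ℝ) ^ k * ∏ j ∈ Finset.range k, c j = ∏ j ∈ Finset.range k, (- c j) := by
      rw [Finset.prod_neg]; simp
    rw [this]
    apply Finset.prod_pos
    intro j hj
    have := h1 j (Finset.mem_range.1 hj)
    linarith
  · apply Finset.prod_pos
    intro j hj
    rw [Finset.mem_Ico] at hj
    exact h2 j hj.1 hj.2

lemma dP_far (q : ℝ) (hq0 : 0 < q) (N : ℕ) (M : ℝ) :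
    ∃ T < M, 0 < (-1 : ℝ) ^ (N + 1) * (dP q (N + 1)).eval T := by
  set Q : ℝ[X] := C ((-1 : ℝ) ^ (N + 1)) * (dP q (N + 1)).comp (C (-1) * X) with hQ
  have hc : ∀ n, Q.coeff n = (-1 : ℝ) ^ (N + 1) * ((dP q (N + 1)).coeff n * (-1) ^ n) := by
    intro n
    rw [hQ, coeff_C_mul, comp_C_mul_X_coeff]
  have hpos : 0 < Q.coeff (N + 1) := by
    rw [hc, dP_coeff, Nat.choose_self]
    have : (-1 : ℝ) ^ (N + 1) * (-1 : ℝ) ^ (N + 1) = 1 := by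
      rw [← mul_pow]; simp
    have h2 : 0 < q ^ ((N + 1) * (N + 1 - 1) / 2) := by positivity
    calc 0 < q ^ ((N + 1) * (N + 1 - 1) / 2) := h2
      _ = ((-1 : ℝ) ^ (N + 1) * (-1 : ℝ) ^ (N + 1)) * q ^ ((N + 1) * (N + 1 - 1) / 2) := by
        rw [this, one_mul]
      _ = _ := by push_cast; ring
  have hdeg : Q.natDegree = N + 1 := by
    apply le_antisymm
    · rw [natDegree_le_iff_coeff_eq_zero]
      intro n hn
      rw [hc, coeff_eq_zero_of_natDegree_lt ((dP_natDegree_le q (N + 1)).trans_lt hn)]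
      simp
    · exact le_natDegree_of_ne_zero hpos.ne'
  have ht := tendsto_atTop_of_leadingCoeff_nonneg Q
    (natDegree_pos_iff_degree_pos.1 (by omega)) (by rw [leadingCoeff, hdeg]; exact hpos.le)
  obtain ⟨t, ht1, ht2⟩ := ((ht.eventually_gt_atTop 0).and (eventually_gt_atTop (-M))).exists
  refine ⟨-t, by linarith, ?_⟩
  simpa [hQ, eval_comp] using ht1

lemma dP_core (q : ℝ) (hq0 : 0 < q) (hq1 : q < 1) (N : ℕ) :
    ∃ a : ℕ → ℝ, (∀ k < N, 0 < a k) ∧ (∀ k, k + 1 < N → a (k + 1) < q * a k) ∧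
      dP q N = ∏ k ∈ Finset.range N, (1 + C (a k) * X) := by
  induction N with
  | zero => exact ⟨fun _ => 1, by simp, by simp, by simp [dP]⟩
  | succ N ih =>
    obtain ⟨a, ha, hs, hP⟩ := ih
    have hev : ∀ t, (dP q N).eval t = ∏ k ∈ Finset.range N, (1 + a k * t) := by
      intro t; rw [hP, eval_prod]; simp
    -- decay
    have hmono : ∀ d j, j + d + 1 < N → a (j + d + 1) < q * a j := by
      intro d
      induction d with
      | zero => intro j hj; exact hs j hj
      | succ d ihd =>
        intro j hj
        have h1 := ihd j (by omega)
        have h2 := hs (j + d + 1) (by omega)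
        have h3 := ha (j + d + 1) (by omega)
        have : q * a (j + d + 1) < a (j + d + 1) := by nlinarith
        have e : j + (d + 1) + 1 = j + d + 1 + 1 := by omega
        rw [e]; linarith
    have hlt : ∀ i j, i < j → j < N → a j < q * a i := by
      intro i j hij hj
      obtain ⟨d, rfl⟩ := Nat.exists_eq_add_of_lt hij
      exact hmono d i hj
    have hsgn : ∀ t k, k ≤ N → (∀ j < k, 1 + a j * t < 0) → (∀ j, k ≤ j → j < N → 0 < 1 + a j * t) →
        0 < (-1 : ℝ) ^ k * (dP q N).eval t := by
      intro t k hk h1 h2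
      rw [hev]
      exact sign_prod (fun j => 1 + a j * t) N k hk h1 h2
    -- sign at the zeros of `dP q N`
    have hx : ∀ k < N, 0 < (-1 : ℝ) ^ (k + 1) * (dP q (N + 1)).eval (-1 / a k) := by
      intro k hk
      have hak := ha k hk
      have h0 : (dP q N).eval (-1 / a k) = 0 := by
        rw [hev]
        apply Finset.prod_eq_zero (Finset.mem_range.2 hk)
        field_simp; ring
      have h1 : 0 < (-1 : ℝ) ^ k * (dP q N).eval (q * (-1 / a k)) := by
        apply hsgn _ k hk.le
        · intro j hj
          have h := hlt j k hj hk
          have : 1 + a j * (q * (-1 / a k)) = (a k - q * a j) / a k := by field_simp; ring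
          rw [this]
          exact div_neg_of_neg_of_pos (by linarith) hak
        · intro j hj hjN
          have : 1 + a j * (q * (-1 / a k)) = (a k - q * a j) / a k := by field_simp; ring
          rw [this]
          apply div_pos _ hak
          rcases hj.eq_or_lt with rfl | hj
          · nlinarith
          · have h := hlt k j hj hjN
            have := ha j hjN
            nlinarith
      rw [dP_eval_succ, h0, zero_add]
      have e : (-1 : ℝ) ^ (k + 1) * (-1 / a k * (dP q N).eval (q * (-1 / a k)))
        = (1 / a k) * ((-1 : ℝ) ^ k * (dP q N).eval (q * (-1 / a k))) := by
        rw [pow_succ]; ring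
      rw [e]; positivity
    -- sign at the zeros of the shifted polynomial
    have hy : ∀ k < N, 0 < (-1 : ℝ) ^ (k + 1) * (dP q (N + 1)).eval (-1 / (q * a k)) := by
      intro k hk
      have hak := ha k hk
      have h0 : (dP q N).eval (q * (-1 / (q * a k))) = 0 := by
        rw [hev]
        apply Finset.prod_eq_zero (Finset.mem_range.2 hk)
        field_simp; ring
      rw [dP_eval_succ, h0, mul_zero, add_zero]
      have hqa : 0 < q * a k := by positivity
      have e : ∀ j, 1 + a j * (-1 / (q * a k)) = (q * a k - a j) / (q * a k) := by
        intro j; field_simp; ring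
      apply hsgn _ (k + 1) hk
      · intro j hj
        rw [e]
        apply div_neg_of_neg_of_pos _ hqa
        rcases (Nat.lt_succ_iff.1 hj).eq_or_lt with rfl | hj
        · nlinarith
        · have h := hlt j k hj hk
          have := ha j (hj.trans hk)
          nlinarith
      · intro j hj hjN
        rw [e]
        apply div_pos _ hqa
        have h := hlt k j hj hjN
        linarith
    obtain ⟨T, hT, hTs⟩ := dP_far q hq0 N (if N = 0 then 0 else -1 / (q * a (N - 1)))
    set L : ℕ → ℝ := fun k => if k < N then -1 / a k else T with hL
    set R : ℕ → ℝ := fun k => if k = 0 then 0 else -1 / (q * a (k - 1)) with hR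
    have hLs : ∀ k ≤ N, 0 < (-1 : ℝ) ^ (k + 1) * (dP q (N + 1)).eval (L k) := by
      intro k hk
      by_cases h : k < N
      · simp only [hL, h, if_true]; exact hx k h
      · have : k = N := by omega
        subst this
        simpa [hL] using hTs
    have hRs : ∀ k ≤ N, 0 < (-1 : ℝ) ^ k * (dP q (N + 1)).eval (R k) := by
      intro k hk
      cases k with
      | zero => simp [hR, ← coeff_zero_eq_eval_zero, dP_coeff]
      | succ k => simpa [hR] using hy k (by omega)
    have hLR : ∀ k ≤ N, L k < R k := by
      intro k hk
      by_cases h : k < N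
      · simp only [hL, h, if_true]
        cases k with
        | zero =>
          simp only [hR, if_true]
          exact div_neg_of_neg_of_pos (by norm_num) (ha 0 h)
        | succ k =>
          simp only [hR, Nat.succ_ne_zero, if_false, Nat.add_sub_cancel]
          have h1 := hs k h
          have h2 := ha _ h
          have h3 := one_div_lt_one_div_of_lt h2 h1
          rw [neg_div, neg_div]; linarith
      · have : k = N := by omega
        subst this
        simpa [hL, hR] using hT
    have hroot : ∀ k, ∃ y, k ≤ N → (L k < y ∧ y < R k ∧ (dP q (N + 1)).eval y = 0) := by
      intro k
      by_cases hk : k ≤ N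
      · have hcont : ContinuousOn (fun t => (-1 : ℝ) ^ k * (dP q (N + 1)).eval t)
            (Set.Icc (L k) (R k)) := by fun_prop
        have := intermediate_value_Ioo (hLR k hk).le hcont
        have h0 : (0 : ℝ) ∈ Set.Ioo ((-1 : ℝ) ^ k * (dP q (N + 1)).eval (L k))
            ((-1 : ℝ) ^ k * (dP q (N + 1)).eval (R k)) := by
          refine ⟨?_, hRs k hk⟩
          have := hLs k hk
          rw [pow_succ] at this
          linarith
        obtain ⟨y, hy1, hy2⟩ := this h0
        refine ⟨y, fun _ => ⟨hy1.1, hy1.2, ?_⟩⟩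
        simpa using hy2
      · exact ⟨0, fun h => absurd h hk⟩
    choose y hyp using hroot
    have hR0 : ∀ k ≤ N, R k ≤ 0 := by
      intro k hk
      cases k with
      | zero => simp [hR]
      | succ k =>
        simp only [hR, Nat.succ_ne_zero, if_false, Nat.add_sub_cancel]
        have := ha k (by omega)
        exact (div_neg_of_neg_of_pos (by norm_num) (by positivity)).le
    have hyneg : ∀ k ≤ N, y k < 0 := fun k hk => (hyp k hk).2.1.trans_le (hR0 k hk)
    have hsep : ∀ k, k + 1 ≤ N → q * y (k + 1) < y k := by
      intro k hk
      have h1 := (hyp (k + 1) hk).2.1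
      have h2 := (hyp k (by omega)).1
      have h3 : k < N := hk
      simp only [hR, Nat.succ_ne_zero, if_false, Nat.add_sub_cancel] at h1
      simp only [hL, h3, if_true] at h2
      have hak := ha k h3
      have : q * (-1 / (q * a k)) = -1 / a k := by field_simp
      nlinarith
    have hanti : ∀ i j, i < j → j ≤ N → y j < y i := by
      intro i j hij
      induction j, hij using Nat.le_induction with
      | base =>
        intro h
        have := hsep i h
        have := hyneg _ h
        nlinarith
      | succ j hj ihj =>
        intro h
        have := ihj (by omega)
        have := hsep j h
        have := hyneg _ h
        nlinarith
    refine ⟨fun k => -1 / y k, ?_, ?_, ?_⟩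
    · intro k hk
      exact div_pos_of_neg_of_neg (by norm_num) (hyneg k (by omega))
    · intro k hk
      have h1 := hsep k (by omega)
      have h2 := hyneg k (by omega)
      have h3 := hyneg (k + 1) (by omega)
      have e : q * (-1 / y k) - -1 / y (k + 1) = (y k - q * y (k + 1)) / (y k * y (k + 1)) := by
        have := h2.ne
        have := h3.ne
        field_simp; ring
      have : 0 < (y k - q * y (k + 1)) / (y k * y (k + 1)) :=
        div_pos (by linarith) (mul_pos_of_neg_of_neg h2 h3)
      linarith
    · set g : Fin (N + 2) → ℝ := Fin.cons 0 (fun i : Fin (N + 1) => y i) with hg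
      have hinj : Function.Injective g := by
        rw [hg, Fin.cons_injective_iff]
        constructor
        · rintro ⟨i, hi⟩
          exact (hyneg i (by omega)).ne hi
        · intro i j hij
          have hij : y i = y j := hij
          by_contra hne
          have hne' : (i : ℕ) ≠ j := fun h => hne (Fin.ext h)
          rcases lt_or_gt_of_ne hne' with h | h
          · exact (hanti _ _ h (by omega)).ne hij.symm
          · exact (hanti _ _ h (by omega)).ne hij
      apply eq_of_natDegree_lt_card_of_eval_eq _ _ hinj
      · intro i
        rw [eval_prod]
        refine Fin.cases ?_ (fun i => ?_) i
        · simp [hg, ← coeff_zero_eq_eval_zero, dP_coeff]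
        · have h0 := (hyp i (by omega)).2.2
          have h1 := (hyneg i (by omega)).ne
          simp only [hg, Fin.cons_succ, h0]
          symm
          apply Finset.prod_eq_zero (Finset.mem_range.2 i.2)
          simp
          field_simp; ring
      · rw [Fintype.card_fin]
        apply max_lt
        · have := dP_natDegree_le q (N + 1); omega
        · refine lt_of_le_of_lt (natDegree_prod_le _ _) ?_
          refine lt_of_le_of_lt (Finset.sum_le_card_nsmul _ _ 1 ?_) (by simp)
          intro i _
          compute_degree

lemma dP_bound (q : ℝ) (hq0 : 0 < q) (hq1 : q < 1) (N : ℕ) (t : ℝ) (ht : 0 ≤ t) :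
    0 ≤ (dP q N).eval t ∧ (dP q N).eval t ≤ Real.exp (N * t) := by
  induction N generalizing t with
  | zero => simp [dP]
  | succ N ih =>
    rw [dP_eval_succ]
    have h1 := ih t ht
    have h2 := ih (q * t) (by positivity)
    have h3 : Real.exp (N * (q * t)) ≤ Real.exp (N * t) := by
      apply Real.exp_le_exp.2
      gcongr
      nlinarith
    have h4 := Real.add_one_le_exp t
    refine ⟨by nlinarith [mul_nonneg ht h2.1], ?_⟩
    calc _ ≤ Real.exp (N * t) + t * Real.exp (N * t) := by
            gcongr
            · exact h1.2
            · exact h2.2.trans h3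
      _ = (t + 1) * Real.exp (N * t) := by ring
      _ ≤ Real.exp t * Real.exp (N * t) := by gcongr
      _ = _ := by rw [← Real.exp_add]; push_cast; ring_nf

lemma dP_roots (q : ℝ) (hq0 : 0 < q) (hq1 : q < 1) (N : ℕ) :
    ∃ b : ℕ → ℝ, (∀ k, 0 ≤ b k) ∧ (∀ k, b (k + 1) ≤ q * b k) ∧ (∀ k, b k ≤ Real.exp 1 * q ^ k) ∧
      ∀ z : ℂ, ∏' k, (1 + (b k : ℂ) * z) = aeval (z / N) (dP q N) := by
  obtain ⟨a, ha, hs, hP⟩ := dP_core q hq0 hq1 N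
  set b : ℕ → ℝ := fun k => if k < N then a k / N else 0 with hb
  have hb0 : ∀ k, 0 ≤ b k := by
    intro k
    simp only [hb]
    split_ifs with h
    · have := ha k h; positivity
    · rfl
  have hbs : ∀ k, b (k + 1) ≤ q * b k := by
    intro k
    by_cases h : k + 1 < N
    · have h' : k < N := by omega
      simp only [hb, h, h', if_true]
      rw [← mul_div_assoc]
      gcongr
      exact (hs k h).le
    · have : b (k + 1) = 0 := by simp only [hb, h, if_false]
      rw [this]
      exact mul_nonneg hq0.le (hb0 k)
  have hbound0 : b 0 ≤ Real.exp 1 := by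
    by_cases h : 0 < N
    · have hN : (0 : ℝ) < N := by exact_mod_cast h
      have h1 := (dP_bound q hq0 hq1 N (1 / N) (by positivity)).2
      have e : (N : ℝ) * (1 / N) = 1 := by field_simp
      rw [e] at h1
      have h2 : (dP q N).eval (1 / N : ℝ) = ∏ k ∈ Finset.range N, (1 + a k * (1 / N)) := by
        rw [hP, eval_prod]; simp
      have h3 : 1 + a 0 * (1 / N) ≤ ∏ k ∈ Finset.range N, (1 + a k * (1 / N)) := by
        rw [← Finset.mul_prod_erase _ _ (Finset.mem_range.2 h)]
        have h00 := ha 0 h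
        apply le_mul_of_one_le_right (by positivity)
        refine (Finset.prod_const_one (s := (Finset.range N).erase 0)).symm.le.trans ?_
        apply Finset.prod_le_prod (fun _ _ => zero_le_one)
        intro i hi
        have := ha i (Finset.mem_range.1 (Finset.mem_of_mem_erase hi))
        have : 0 ≤ a i * (1 / N) := by positivity
        linarith
      have h4 : b 0 = a 0 * (1 / N) := by simp only [hb, h, if_true]; ring
      rw [h4]; linarith
    · have : b 0 = 0 := by simp only [hb, h, if_false]
      rw [this]; positivity
  refine ⟨b, hb0, hbs, ?_, ?_⟩
  · intro k
    induction k with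
    | zero => simpa using hbound0
    | succ k ih =>
      calc _ ≤ q * b k := hbs k
        _ ≤ q * (Real.exp 1 * q ^ k) := by gcongr
        _ = _ := by ring
  · intro z
    rw [tprod_eq_prod (s := Finset.range N), hP, map_prod]
    · apply Finset.prod_congr rfl
      intro k hk
      simp [hb, Finset.mem_range.1 hk]
      ring
    · intro k hk
      simp only [Finset.mem_range] at hk
      simp [hb, hk]

lemma dP_tendsto (q : ℝ) (hq0 : 0 < q) (hq1 : q < 1) (z : ℂ) :
    Tendsto (fun N : ℕ => aeval (z / N) (dP q N)) atTop
      (𝓝 (∑' n : ℕ, z ^ n * (q : ℂ) ^ (n * (n - 1) / 2) / (n.factorial : ℂ))) := by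
  have e : ∀ N : ℕ, aeval (z / N) (dP q N) =
      ∑' n : ℕ, (((N.choose n : ℝ) * (1 / N : ℝ) ^ n : ℝ) : ℂ) *
        (z ^ n * (q : ℂ) ^ (n * (n - 1) / 2)) := by
    intro N
    rw [tsum_eq_sum (s := Finset.range (N + 1)),
      aeval_eq_sum_range' (Nat.lt_succ_of_le (dP_natDegree_le q N))]
    · apply Finset.sum_congr rfl
      intro n _
      rw [dP_coeff, Complex.real_smul]
      push_cast
      rw [div_pow, div_pow]
      ring
    · intro n hn
      simp only [Finset.mem_range, not_lt] at hn
      rw [Nat.choose_eq_zero_of_lt hn]; simp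
  simp_rw [e]
  apply tendsto_tsum_of_dominated_convergence (Real.summable_pow_div_factorial ‖z‖)
  · intro n
    have h1 : Tendsto (fun N : ℕ => (N : ℝ) * (1 / N : ℝ)) atTop (𝓝 1) := by
      apply tendsto_const_nhds.congr'
      filter_upwards [eventually_gt_atTop 0] with N hN
      have : (N : ℝ) ≠ 0 := by positivity
      field_simp
    have h2 := ProbabilityTheory.tendsto_choose_mul_pow_atTop n h1
    have h3 := ((Complex.continuous_ofReal.tendsto _).comp h2).mul_const
      (z ^ n * (q : ℂ) ^ (n * (n - 1) / 2))
    refine Eq.subst (motive := fun w => Tendsto _ atTop (𝓝 w)) ?_ h3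
    rw [one_pow, Complex.ofReal_div, Complex.ofReal_one, Complex.ofReal_natCast]
    ring
  · apply Eventually.of_forall
    intro N n
    rw [norm_mul, norm_mul, Complex.norm_real, norm_pow, norm_pow, Complex.norm_real]
    have hc : (N.choose n : ℝ) * (1 / N : ℝ) ^ n ≤ 1 / n.factorial := by
      rcases Nat.eq_zero_or_pos N with rfl | hN
      · cases n with
        | zero => simp
        | succ n => simp
      · have hN' : (0 : ℝ) < N := by exact_mod_cast hN
        have := Nat.choose_le_pow_div (α := ℝ) n N
        calc _ ≤ ((N : ℝ) ^ n / n.factorial) * (1 / N : ℝ) ^ n := by gcongr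
          _ = _ := by rw [div_pow, one_pow]; field_simp
    rw [Real.norm_of_nonneg (by positivity), Real.norm_of_nonneg hq0.le]
    calc _ ≤ (1 / n.factorial : ℝ) * (‖z‖ ^ n * 1) := by
            gcongr
            exact pow_le_one₀ hq0.le hq1.le
      _ = _ := by ring

/-- For `0 < q < 1`, the deformed exponential function
`f(z) = Σ_{n=0}^∞ z^n q^{n(n-1)/2}/n!` admits the infinite product representation
`f(z) = ∏_{n=1}^∞ (1 - z/x_n)`, where `(x_n)` is the strictly decreasing sequence of its
(negative real) zeros. -/
theorem infinite_product_representation (q : ℝ) (hq0 : 0 < q) (hq1 : q < 1)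
    (f : ℂ → ℂ)
    (hf : ∀ z : ℂ, f z = ∑' n : ℕ, z ^ n * (q : ℂ) ^ (n * (n - 1) / 2) / (n.factorial : ℂ)) :
    ∃ x : ℕ → ℝ, StrictAnti x ∧ (∀ n : ℕ, x n < 0)
      ∧ (∀ z : ℂ, f z = 0 ↔ ∃ n : ℕ, z = (x n : ℂ))
      ∧ (∀ z : ℂ, f z = ∏' n : ℕ, (1 - z / (x n : ℂ))) := by
  choose b hb0 hbs hbb hbp using dP_roots q hq0 hq1
  have hcomp : IsCompact (Set.univ.pi fun k : ℕ => Set.Icc (0 : ℝ) (Real.exp 1 * q ^ k)) :=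
    isCompact_univ_pi fun k => isCompact_Icc
  obtain ⟨c, -, φ, hφ, hlim⟩ := hcomp.tendsto_subseq (x := b)
    (fun N => Set.mem_univ_pi.2 fun k => ⟨hb0 N k, hbb N k⟩)
  have hlk : ∀ k, Tendsto (fun j => b (φ j) k) atTop (𝓝 (c k)) := fun k =>
    (tendsto_pi_nhds.1 hlim) k
  have hc0 : ∀ k, 0 ≤ c k := fun k => ge_of_tendsto' (hlk k) fun j => hb0 _ _
  have hcs : ∀ k, c (k + 1) ≤ q * c k := fun k =>
    le_of_tendsto_of_tendsto' (hlk (k + 1)) ((hlk k).const_mul q) fun j => hbs _ _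
  have hcb : ∀ k, c k ≤ Real.exp 1 * q ^ k := fun k => le_of_tendsto' (hlk k) fun j => hbb _ _
  have hsumm : ∀ z : ℂ, Summable fun k : ℕ => Real.exp 1 * q ^ k * ‖z‖ := fun z =>
    ((summable_geometric_of_lt_one hq0.le hq1).mul_left _).mul_right _
  have hprod : ∀ z : ℂ, f z = ∏' k, (1 + (c k : ℂ) * z) := by
    intro z
    have h1 : Tendsto (fun j => ∏' k, (1 + (b (φ j) k : ℂ) * z)) atTop
        (𝓝 (∏' k, (1 + (c k : ℂ) * z))) := by
      apply tendsto_tprod_one_add_of_dominated_convergence (hsumm z)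
      · intro k
        exact ((Complex.continuous_ofReal.tendsto _).comp (hlk k)).mul_const z
      · apply Eventually.of_forall
        intro j k
        rw [norm_mul, Complex.norm_real, Real.norm_of_nonneg (hb0 _ _)]
        gcongr
        exact hbb _ _
    simp_rw [hbp] at h1
    have h2 := (dP_tendsto q hq0 hq1 z).comp hφ.tendsto_atTop
    rw [hf]
    exact tendsto_nhds_unique h2 h1
  have hcpos : ∀ k, 0 < c k := by
    intro K
    rcases (hc0 K).lt_or_eq with h | h
    · exact h
    exfalso
    have hz : ∀ k, K ≤ k → c k = 0 := by
      intro k hk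
      induction k, hk using Nat.le_induction with
      | base => exact h.symm
      | succ k hk ih =>
        have := hcs k
        rw [ih, mul_zero] at this
        exact le_antisymm this (hc0 _)
    -- real version of the sum
    set s : ℝ → ℕ → ℝ := fun t n => t ^ n * q ^ (n * (n - 1) / 2) / n.factorial with hs
    have hss : ∀ t, 0 ≤ t → Summable (s t) := by
      intro t ht
      apply Summable.of_nonneg_of_le _ _ (Real.summable_pow_div_factorial t)
      · intro n; simp only [hs]; positivity
      · intro n
        simp only [hs]
        gcongr
        exact mul_le_of_le_one_right (by positivity) (pow_le_one₀ hq0.le hq1.le)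
    have heq : ∀ t : ℝ, ∑' n, s t n = ∏ k ∈ Finset.range K, (1 + c k * t) := by
      intro t
      have h1 := hprod t
      rw [hf, tprod_eq_prod (s := Finset.range K)] at h1
      · apply Complex.ofReal_injective
        rw [Complex.ofReal_tsum]
        simp only [hs]
        push_cast
        exact h1
      · intro k hk
        simp only [Finset.mem_range, not_lt] at hk
        simp [hz k hk]
    set A : ℝ := q ^ ((K + 1) * (K + 1 - 1) / 2) / (K + 1).factorial with hA
    have hApos : 0 < A := by positivity
    have hle : ∀ t, 1 ≤ t → A * t ≤ (1 + Real.exp 1) ^ K := by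
      intro t ht
      have ht0 : 0 < t := by linarith
      have h1 : s t (K + 1) ≤ ∑' n, s t n :=
        (hss t ht0.le).le_tsum (K + 1) fun n _ => by simp only [hs]; positivity
      have h2 : ∏ k ∈ Finset.range K, (1 + c k * t) ≤ ((1 + Real.exp 1) * t) ^ K := by
        calc _ ≤ ∏ k ∈ Finset.range K, ((1 + Real.exp 1) * t) := by
              apply Finset.prod_le_prod
              · intro k _
                have := hc0 k
                positivity
              · intro k _
                have h3 : c k ≤ Real.exp 1 := (hcb k).trans
                  (mul_le_of_le_one_right (by positivity) (pow_le_one₀ hq0.le hq1.le))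
                nlinarith
          _ = _ := by simp
      rw [heq] at h1
      have h3 : s t (K + 1) = (A * t) * t ^ K := by
        simp only [hs, hA]; ring
      have h4 : (A * t) * t ^ K ≤ (1 + Real.exp 1) ^ K * t ^ K := by
        rw [← mul_pow, ← h3]; exact h1.trans h2
      exact le_of_mul_le_mul_right h4 (by positivity)
    have hB : 0 < (1 + Real.exp 1) ^ K := by positivity
    have := hle ((1 + Real.exp 1) ^ K / A + 1) (by
      have : 0 < (1 + Real.exp 1) ^ K / A := by positivity
      linarith)
    have e : A * ((1 + Real.exp 1) ^ K / A + 1) = (1 + Real.exp 1) ^ K + A := by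
      field_simp
    linarith
  have hfac : ∀ (z : ℂ) k, 1 - z / ((-1 / c k : ℝ) : ℂ) = 1 + (c k : ℂ) * z := by
    intro z k
    have : (c k : ℂ) ≠ 0 := by exact_mod_cast (hcpos k).ne'
    push_cast
    field_simp
    ring
  refine ⟨fun k => -1 / c k, ?_, ?_, ?_, ?_⟩
  · apply strictAnti_nat_of_succ_lt
    intro k
    have h1 := hcpos k
    have h2 := hcpos (k + 1)
    have h3 : c (k + 1) < c k := by nlinarith [hcs k]
    have := one_div_lt_one_div_of_lt h2 h3
    rw [neg_div, neg_div]; linarith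
  · intro k
    exact div_neg_of_neg_of_pos (by norm_num) (hcpos k)
  · intro z
    constructor
    · intro h
      by_contra hne
      push Not at hne
      rw [hprod] at h
      refine tprod_one_add_ne_zero_of_summable (f := fun k => (c k : ℂ) * z) ?_ ?_ h
      · intro k h0
        apply hne k
        have : (c k : ℂ) ≠ 0 := by exact_mod_cast (hcpos k).ne'
        push_cast
        field_simp
        linear_combination h0
      · apply Summable.of_nonneg_of_le (fun _ => norm_nonneg _) _ (hsumm z)
        intro k
        rw [norm_mul, Complex.norm_real, Real.norm_of_nonneg (hc0 _)]
        gcongr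
        exact hcb _
    · rintro ⟨n, rfl⟩
      rw [hprod]
      apply tprod_of_exists_eq_zero
      refine ⟨n, ?_⟩
      have : (c n : ℂ) ≠ 0 := by exact_mod_cast (hcpos n).ne'
      push_cast
      field_simp
      ring
  · intro z
    rw [hprod]
    exact tprod_congr fun k => (hfac z k).symm
end
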